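/- arXiv:2310.19698 — 7 statements merged into one kernel-verified Lean document; each statement's English description precedes it below -/
import Mathlib

section
/- For every vocabulary size V > 0 and context size N > 0, there exist a transformer (of the simplified decoder-only form described in the context) with vocabulary size V, context size N, embedding dimension d_e = N, a single attention block with two heads, a three-layer MLP, and an inverse temperature T > 0, such that for every token sequence (Y_1, ..., Y_N) ∈ {1,...,V}^N, greedy autoregressive generation started from the single virtual-token input s_1 = ((Y_1 − 1)/V, ..., (Y_N − 1)/V) produces exactly the sequence (Y_1, ..., Y_N). In particular, by varying a single virtual token the model can generate all V^N possible completions of length N. -/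
open Matrix Real

/-- Softmax attention weight of query position `i` on key position `j` for one head with query
and key matrices `Wq, Wk` and inverse temperature `T`. -/
noncomputable def headAttn {k din p : ℕ} (T : ℝ)
    (Wq Wk : Matrix (Fin k) (Fin din) ℝ) (x : Fin p → Fin din → ℝ) (i j : Fin p) : ℝ :=
  exp (T / Real.sqrt k * (Wq.mulVec (x i) ⬝ᵥ Wk.mulVec (x j))) /
    ∑ r, exp (T / Real.sqrt k * (Wq.mulVec (x i) ⬝ᵥ Wk.mulVec (x r)))

/-- Output of a multi-head attention block at position `i`:
`t_i = Σ_h Σ_j A^h_{ij} W_V^h x_j`. -/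
noncomputable def attnBlock {k din dout p H : ℕ} (T : ℝ)
    (Wq Wk : Fin H → Matrix (Fin k) (Fin din) ℝ)
    (Wv : Fin H → Matrix (Fin dout) (Fin din) ℝ)
    (x : Fin p → Fin din → ℝ) (i : Fin p) : Fin dout → ℝ :=
  ∑ h, ∑ j, headAttn T (Wq h) (Wk h) x i j • (Wv h).mulVec (x j)

/-- One MLP layer: a linear map with bias, optionally ReLU-activated. -/
noncomputable def mlpLayer {a b : ℕ} (M : Matrix (Fin b) (Fin a) ℝ) (bias : Fin b → ℝ)
    (act : Bool) (x : Fin a → ℝ) : Fin b → ℝ :=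
  fun u => if act then max 0 (M.mulVec x u + bias u) else M.mulVec x u + bias u

/-- One-hot position encoding `e_N(i)` for position `i` in a context of size `N`. -/
def posEnc (N : ℕ) (i : ℕ) : Fin N → ℝ := fun n => (if (n : ℕ) = i then 1 else 0)

/-- Value matrix of the first head. -/
def valueMat (N : ℕ) : Matrix (Fin (N + 1)) (Fin (N + N)) ℝ :=
  fun a => Fin.lastCases
    (Fin.append (fun _ => 0) (fun m : Fin N => if (m : ℕ) = 0 then 1 else 0))
    (fun n : Fin N => Fin.append (fun m => if m = n then 1 else 0)
      (fun m : Fin N => (if (m : ℕ) = n then 1 else 0) - (if (m : ℕ) = n + 1 then 1 else 0)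
        - (if (m : ℕ) = 0 then 1 else 0))) a

lemma sum_mul_posEnc {N j : ℕ} (hj : j < N) (f : ℕ → ℝ) :
    ∑ m : Fin N, f m * posEnc N j m = f j := by
  rw [Finset.sum_eq_single (⟨j, hj⟩ : Fin N)]
  · simp [posEnc]
  · intro b _ hb
    have : (b : ℕ) ≠ j := fun h => hb (Fin.ext h)
    simp [posEnc, this]
  · simp

lemma valueMat_last {N j : ℕ} (hj : j < N) (v : Fin N → ℝ) :
    (valueMat N).mulVec (Fin.append v (posEnc N j)) (Fin.last N) = if j = 0 then 1 else 0 := by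
  simp only [Matrix.mulVec, dotProduct, Fin.sum_univ_add, valueMat, Fin.lastCases_last,
    Fin.append_left, Fin.append_right]
  rw [sum_mul_posEnc hj (fun m => if m = 0 then 1 else 0)]
  simp

lemma valueMat_castSucc {N j : ℕ} (hj : j < N) (v : Fin N → ℝ) (n : Fin N) :
    (valueMat N).mulVec (Fin.append v (posEnc N j)) n.castSucc =
      v n + ((if j = n then 1 else 0) - (if j = n + 1 then 1 else 0)
        - (if j = 0 then 1 else 0)) := by
  simp only [Matrix.mulVec, dotProduct, Fin.sum_univ_add, valueMat, Fin.lastCases_castSucc,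
    Fin.append_left, Fin.append_right]
  rw [sum_mul_posEnc hj (fun m => (if m = (n : ℕ) then 1 else 0)
    - (if m = (n : ℕ) + 1 then 1 else 0) - (if m = 0 then 1 else 0))]
  simp

lemma sum_ind (i n : ℕ) :
    ∑ j : Fin (i + 1), (if (j : ℕ) = n then (1 : ℝ) else 0) = if n ≤ i then 1 else 0 := by
  rw [Fin.sum_univ_eq_sum_range (fun j => if j = n then (1 : ℝ) else 0)]
  simp

/-- **Exponential unconditional generation capacity of a single virtual token.**
For any `V, N > 0` there is a transformer with vocabulary size `V`, context size `N`, embedding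
size `d_e = N`, one attention layer with two heads and a three-layer MLP such that greedy
autoregressive generation started from the single virtual token
`s₁ = ((Y₁−1)/V, ..., (Y_N−1)/V)` produces exactly the sequence `(Y₁, ..., Y_N)` (tokens are
`0`-indexed as `Fin V`, so `(Y i : ℝ)/V` stands for `(Yᵢ−1)/V`): at each step `i`, with input
consisting of `s₁` followed by the embeddings of `Y₁, ..., Y_{i−1}`, the logits at the last
position attain their strict maximum at `Y i`. -/
theorem virtual_token_unconditional_generation (V N : ℕ) (hV : 0 < V) (hN : 0 < N) :
    ∃ (k dout d1 d2 : ℕ) (T : ℝ), 0 < T ∧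
    ∃ (E : Matrix (Fin N) (Fin V) ℝ)
      (Wq Wk : Fin 2 → Matrix (Fin k) (Fin (N + N)) ℝ)
      (Wv : Fin 2 → Matrix (Fin dout) (Fin (N + N)) ℝ)
      (M1 : Matrix (Fin d1) (Fin dout) ℝ) (b1 : Fin d1 → ℝ) (a1 : Bool)
      (M2 : Matrix (Fin d2) (Fin d1) ℝ) (b2 : Fin d2 → ℝ) (a2 : Bool)
      (M3 : Matrix (Fin V) (Fin d2) ℝ) (b3 : Fin V → ℝ) (a3 : Bool),
    ∀ (Y : Fin N → Fin V) (i : Fin N),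
      let s1 : Fin N → ℝ := fun n => (Y n : ℝ) / V
      let emb : Fin ((i : ℕ) + 1) → Fin N → ℝ :=
        Fin.cases s1 (fun j => fun n => E n (Y (Fin.castLE i.isLt.le j)))
      let x : Fin ((i : ℕ) + 1) → Fin (N + N) → ℝ :=
        fun j => Fin.append (emb j) (posEnc N (j : ℕ))
      let logits : Fin V → ℝ :=
        mlpLayer M3 b3 a3 (mlpLayer M2 b2 a2 (mlpLayer M1 b1 a1
          (attnBlock T Wq Wk Wv x (Fin.last (i : ℕ)))))
      ∀ u : Fin V, u ≠ Y i → logits u < logits (Y i) := by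
  refine ⟨0, N + 1, N + 1, V, 1, one_pos, 0, 0, 0, fun h => if h = 0 then valueMat N else 0,
    1, 0, true, fun u => Fin.lastCases (-(u : ℝ) ^ 2) (fun _ => 2 * (u : ℝ) * V), 0, false,
    1, 0, false, ?_⟩
  intro Y i s1 emb x logits u hu
  have hc : (0 : ℝ) < ((i : ℕ) + 1 : ℝ)⁻¹ := by positivity
  set c : ℝ := ((i : ℕ) + 1 : ℝ)⁻¹ with hcdef
  have hVr : (0 : ℝ) < V := by exact_mod_cast hV
  have hat : attnBlock 1 (0 : Fin 2 → Matrix (Fin 0) (Fin (N + N)) ℝ) 0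
      (fun h => if h = 0 then valueMat N else 0) x (Fin.last (i : ℕ))
      = c • ∑ j, (valueMat N).mulVec (x j) := by
    simp [attnBlock, headAttn, Finset.smul_sum, hcdef]
  have hj : ∀ j : Fin ((i : ℕ) + 1), (j : ℕ) < N := fun j => by omega
  have hlast : (∑ j, (valueMat N).mulVec (x j)) (Fin.last N) = 1 := by
    rw [Finset.sum_apply]
    simp only [x, valueMat_last (hj _)]
    rw [sum_ind]; simp
  have hcs : ∀ n : Fin N, (∑ j, (valueMat N).mulVec (x j)) n.castSucc
      = (Y n : ℝ) / V + (if n = i then 1 else 0) - 1 := by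
    intro n
    rw [Finset.sum_apply]
    simp only [x, valueMat_castSucc (hj _)]
    rw [Finset.sum_add_distrib, Finset.sum_sub_distrib, Finset.sum_sub_distrib, sum_ind, sum_ind,
      sum_ind, Fin.sum_univ_succ]
    simp only [emb, s1, Fin.cases_zero, Fin.cases_succ, Matrix.zero_apply, Finset.sum_const_zero]
    rcases lt_trichotomy (n : ℕ) i with h | h | h
    · have h1 : n ≠ i := fun e => by simp [e] at h
      have h2 : (n : ℕ) ≤ i := h.le
      have h3 : (n : ℕ) + 1 ≤ i := h
      rw [if_neg h1, if_pos h2, if_pos h3]; simp; ring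
    · have h1 : n = i := Fin.ext h
      subst h1
      simp
    · have h1 : n ≠ i := fun e => by simp [e] at h
      have h2 : ¬ (n : ℕ) ≤ i := by omega
      have h3 : ¬ (n : ℕ) + 1 ≤ i := by omega
      rw [if_neg h1, if_neg h2, if_neg h3]; simp; ring
  have hlog : ∀ w : Fin V, logits w = c * (2 * w * Y i - (w : ℝ) ^ 2) := by
    intro w
    simp only [logits, hat]
    have hrelu : ∀ n : Fin N, max 0 (c * (∑ j, (valueMat N).mulVec (x j)) n.castSucc)
        = if n = i then c * ((Y i : ℝ) / V) else 0 := by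
      intro n
      rw [hcs]
      split_ifs with h
      · subst h
        rw [add_sub_cancel_right]
        exact max_eq_right (by positivity)
      · apply max_eq_left
        have : (Y n : ℝ) / V ≤ 1 := by
          rw [div_le_one hVr]
          exact_mod_cast (Y n).isLt.le
        exact mul_nonpos_of_nonneg_of_nonpos hc.le (by linarith)
    generalize (∑ j, (valueMat N).mulVec (x j)) = S at hrelu hlast ⊢
    have l1 : mlpLayer 1 0 true (c • S) = fun a => max 0 (c * S a) := by
      funext a; simp [mlpLayer]
    have l3 : ∀ z : Fin V → ℝ, mlpLayer 1 0 false z = z := by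
      intro z; funext a; simp [mlpLayer]
    rw [l1, l3]
    simp only [mlpLayer, Bool.false_eq_true, if_false, Pi.zero_apply, add_zero]
    simp only [Matrix.mulVec, dotProduct, Fin.sum_univ_castSucc,
      Fin.lastCases_last, Fin.lastCases_castSucc]
    simp only [hrelu, hlast]
    rw [max_eq_right (by positivity)]
    simp
    field_simp
    ring
  rw [hlog, hlog]
  apply mul_lt_mul_of_pos_left _ hc
  have hne : (u : ℝ) - (Y i : ℝ) ≠ 0 := by
    rw [sub_ne_zero]
    exact fun h => hu (Fin.ext (by exact_mod_cast h))
  have := pow_pos (abs_pos.mpr hne) 2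
  rw [sq_abs] at this
  nlinarith
end

section
/- For every vocabulary size V > 0, there exist a transformer (of the simplified decoder-only form described in the context) with vocabulary size V, context size N = 2, embedding dimension d_e = V, a single attention block with two heads, a three-layer MLP, and an inverse temperature T > 0, such that for every map m : {1,...,V} → {1,...,V} and every user token X ∈ {1,...,V}, when the input consists of the virtual token s_1 = (m(1)/V, ..., m(V)/V) at position 1 followed by the embedding of X at position 2, the argmax of the output logits at position 2 equals m(X). In particular, by selecting the single virtual token s_1 one can realize any of the V^V maps from a user input token to a model response token. -/
open Matrix Real

/-- **Conditional generation capacity of a single virtual token (`n_X = n_Y = 1`).**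
For any `V > 0` there is a transformer with vocabulary size `V`, context size `N = 2`, embedding
size `d_e = V`, one attention layer with two heads and a three-layer MLP that reproduces any map
`m : {1,...,V} → {1,...,V}` when conditioned on the single virtual token
`s₁ = (m(1)/V, ..., m(V)/V)` (tokens are `0`-indexed as `Fin V`, so `((m v : ℕ)+1)/V` stands for
`m(v)/V`): for every user token `X`, the output logits at position 2 attain their strict maximum
at `m X`. -/
theorem virtual_token_conditional_generation (V : ℕ) (hV : 0 < V) :
    ∃ (k dout d1 d2 : ℕ) (T : ℝ), 0 < T ∧
    ∃ (E : Matrix (Fin V) (Fin V) ℝ)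
      (Wq Wk : Fin 2 → Matrix (Fin k) (Fin (V + 2)) ℝ)
      (Wv : Fin 2 → Matrix (Fin dout) (Fin (V + 2)) ℝ)
      (M1 : Matrix (Fin d1) (Fin dout) ℝ) (b1 : Fin d1 → ℝ) (a1 : Bool)
      (M2 : Matrix (Fin d2) (Fin d1) ℝ) (b2 : Fin d2 → ℝ) (a2 : Bool)
      (M3 : Matrix (Fin V) (Fin d2) ℝ) (b3 : Fin V → ℝ) (a3 : Bool),
    ∀ (m : Fin V → Fin V) (X : Fin V),
      let s1 : Fin V → ℝ := fun v => ((m v : ℕ) + 1 : ℝ) / V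
      let x : Fin 2 → Fin (V + 2) → ℝ :=
        ![Fin.append s1 (posEnc 2 0), Fin.append (fun n => E n X) (posEnc 2 1)]
      let logits : Fin V → ℝ :=
        mlpLayer M3 b3 a3 (mlpLayer M2 b2 a2 (mlpLayer M1 b1 a1
          (attnBlock T Wq Wk Wv x 1)))
      ∀ u : Fin V, u ≠ m X → logits u < logits (m X) := by
  classical
  refine ⟨1, V, V, 1, 1, one_pos, 1, fun _ => 0, fun _ => 0,
    fun _ => Matrix.of fun u j => if j = Fin.castAdd 2 u then 1 else 0,
    1, fun _ => -1, true,
    Matrix.of fun _ _ => (V : ℝ), fun _ => 0, false,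
    Matrix.of fun u _ => 2 * ((u : ℕ) + 1 : ℝ), fun u => -((u : ℕ) + 1 : ℝ) ^ 2, false, ?_⟩
  intro m X s1 x logits u hu
  have hVpos : (0 : ℝ) < V := by exact_mod_cast hV
  have hatt : ∀ v : Fin V, attnBlock (H := 2) (1 : ℝ)
      (fun _ => (0 : Matrix (Fin 1) (Fin (V + 2)) ℝ)) (fun _ => 0)
      (fun _ => Matrix.of fun (u : Fin V) (j : Fin (V + 2)) =>
        if j = Fin.castAdd 2 u then (1 : ℝ) else 0) x 1 v
      = s1 v + (if v = X then 1 else 0) := by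
    intro v
    simp [attnBlock, headAttn, Matrix.mulVec, dotProduct, x, Fin.sum_univ_two, Matrix.one_apply]
  have hs0 : ∀ v, 0 ≤ s1 v := fun v => by positivity
  have hs1 : ∀ v, s1 v ≤ 1 := fun v => by
    have h : ((m v : ℕ) + 1 : ℝ) ≤ V := by exact_mod_cast (m v).isLt
    exact (div_le_one hVpos).2 h
  have hl1 : ∀ v : Fin V, mlpLayer (1 : Matrix (Fin V) (Fin V) ℝ) (fun _ => -1) true
      (attnBlock (H := 2) (1 : ℝ)
      (fun _ => (0 : Matrix (Fin 1) (Fin (V + 2)) ℝ)) (fun _ => 0)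
      (fun _ => Matrix.of fun (u : Fin V) (j : Fin (V + 2)) =>
        if j = Fin.castAdd 2 u then (1 : ℝ) else 0) x 1) v
      = if v = X then s1 X else 0 := by
    intro v
    simp only [mlpLayer, if_true, Matrix.one_mulVec, hatt]
    split_ifs with h
    · subst h
      rw [max_eq_right] <;> linarith [hs0 v]
    · rw [max_eq_left]
      linarith [hs1 v]
  have hlog : ∀ w : Fin V, logits w
      = 2 * ((w : ℕ) + 1 : ℝ) * ((m X : ℕ) + 1 : ℝ) - ((w : ℕ) + 1 : ℝ) ^ 2 := by
    intro w
    have hsX : (V : ℝ) * s1 X = (m X : ℕ) + 1 := mul_div_cancel₀ _ hVpos.ne'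
    have hlin : ∀ {a b : ℕ} (M : Matrix (Fin b) (Fin a) ℝ) (c : Fin b → ℝ) (y : Fin a → ℝ)
        (i : Fin b), mlpLayer M c false y i = ∑ j, M i j * y j + c i := by
      intro a b M c y i
      simp [mlpLayer, Matrix.mulVec, dotProduct]
    simp only [logits, hlin]
    simp only [Matrix.mulVec, dotProduct, hl1, Matrix.of_apply, Bool.false_eq_true, if_false,
      mul_ite, mul_zero, Finset.sum_ite_eq', Finset.sum_ite_eq, Finset.mem_univ, if_true, hsX,
      Finset.univ_unique, Finset.sum_singleton]
    ring
  rw [hlog, hlog]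
  have hne : ((u : ℕ) : ℝ) - ((m X : ℕ) : ℝ) ≠ 0 := by
    rw [sub_ne_zero]
    exact_mod_cast fun h => hu (Fin.ext h)
  have := sq_pos_of_ne_zero hne
  nlinarith
end

section
/- For every vocabulary size V > 0 and response length N_0 > 0, there exist a transformer (of the simplified decoder-only form described in the context) with vocabulary size V, context size N = 2N_0, embedding dimension d_e = V, a single attention block with two heads, a three-layer MLP, and an inverse temperature T > 0, such that for every map m : {1,...,V} → {1,...,V}^{N_0} and every user token X ∈ {1,...,V}, greedy autoregressive generation after the input consisting of the N_0 virtual tokens s_i = (m(1)_i/V, ..., m(V)_i/V) for i = 1,...,N_0 followed by the embedding of X produces exactly the response sequence (m(X)_1, ..., m(X)_{N_0}). -/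
open Matrix Real

/-- Selection matrix: row `a` reads coordinate `f a`. -/
def selMat {a b : ℕ} (f : Fin a → Fin b) : Matrix (Fin a) (Fin b) ℝ :=
  fun r n => if n = f r then 1 else 0

lemma selMat_mulVec {a b : ℕ} (f : Fin a → Fin b) (x : Fin b → ℝ) (r : Fin a) :
    (selMat f).mulVec x r = x (f r) := by
  simp [selMat, Matrix.mulVec, dotProduct]

lemma tendsto_exp_gap {c : ℝ} (hc : 0 < c) :
    Filter.Tendsto (fun T : ℝ => exp (-(T * c))) Filter.atTop (nhds 0) := by
  refine Real.tendsto_exp_neg_atTop_nhds_zero.comp ?_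
  exact Filter.tendsto_id.atTop_mul_const hc

/-- If the scores from position `i` are the indicator of `j0`, the softmax concentrates on `j0`. -/
lemma headAttn_tendsto {k din p : ℕ} (hk : 0 < k)
    (Wq Wk : Matrix (Fin k) (Fin din) ℝ) (x : Fin p → Fin din → ℝ) (i j0 : Fin p)
    (hs : ∀ j, Wq.mulVec (x i) ⬝ᵥ Wk.mulVec (x j) = if j = j0 then 1 else 0) (j : Fin p) :
    Filter.Tendsto (fun T : ℝ => headAttn T Wq Wk x i j) Filter.atTop
      (nhds (if j = j0 then 1 else 0)) := by
  have hc : (0 : ℝ) < (Real.sqrt k)⁻¹ := by positivity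
  have key : ∀ j : Fin p, Filter.Tendsto
      (fun T : ℝ => exp (T / Real.sqrt k * (if j = j0 then 1 else 0) - T / Real.sqrt k))
      Filter.atTop (nhds (if j = j0 then 1 else 0)) := by
    intro j
    by_cases h : j = j0
    · simp [h]
    · simpa [h, div_eq_mul_inv] using tendsto_exp_gap hc
  have hsum : Filter.Tendsto
      (fun T : ℝ => ∑ r : Fin p,
        exp (T / Real.sqrt k * (if r = j0 then 1 else 0) - T / Real.sqrt k))
      Filter.atTop (nhds 1) := by
    have := tendsto_finsetSum Finset.univ (fun r _ => key r)
    simpa using this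
  have hq := (key j).div hsum one_ne_zero
  rw [div_one] at hq
  refine hq.congr ?_
  intro T
  simp only [headAttn, hs, Pi.div_apply, Real.exp_sub, ← Finset.sum_div]
  rw [div_div_div_cancel_right₀ (Real.exp_ne_zero _)]

lemma attnBlock_tendsto {k din dout p : ℕ} (hk : 0 < k)
    (Wq Wk : Fin 2 → Matrix (Fin k) (Fin din) ℝ)
    (Wv : Fin 2 → Matrix (Fin dout) (Fin din) ℝ)
    (x : Fin p → Fin din → ℝ) (i : Fin p) (j0 : Fin 2 → Fin p)
    (hs : ∀ h j, (Wq h).mulVec (x i) ⬝ᵥ (Wk h).mulVec (x j) = if j = j0 h then 1 else 0) :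
    Filter.Tendsto (fun T : ℝ => attnBlock T Wq Wk Wv x i) Filter.atTop
      (nhds ((Wv 0).mulVec (x (j0 0)) + (Wv 1).mulVec (x (j0 1)))) := by
  have := tendsto_finsetSum (Finset.univ : Finset (Fin 2)) (fun h _ =>
    tendsto_finsetSum (Finset.univ : Finset (Fin p)) (fun j _ =>
      (headAttn_tendsto hk (Wq h) (Wk h) x i (j0 h) (hs h) j).smul_const
        ((Wv h).mulVec (x j))))
  simpa [attnBlock, Fin.sum_univ_two] using this

lemma mlpLayer_continuous {a b : ℕ} (M : Matrix (Fin b) (Fin a) ℝ) (bias : Fin b → ℝ)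
    (act : Bool) : Continuous (mlpLayer M bias act) := by
  refine continuous_pi fun u => ?_
  unfold mlpLayer
  have h : Continuous fun x : Fin a → ℝ => M.mulVec x u + bias u := by
    unfold Matrix.mulVec dotProduct
    fun_prop
  cases act
  · simpa using h
  · simpa using continuous_const.max h

/-- The three MLP layers decode the limiting attention output. -/
lemma mlp_decode (V : ℕ) (hV : 0 < V) (f : Fin V → Fin V) (X u : Fin V) (hu : u ≠ f X)
    (t : Fin V → ℝ) (ht : ∀ v, t v = ((f v : ℕ) + 1 : ℝ) / V + if v = X then 1 else 0) :
    let y := mlpLayer (fun (u : Fin V) (_ : Fin 1) => 2 * (((u : ℕ) + 1 : ℝ) / V))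
        (fun u => - (((u : ℕ) + 1 : ℝ) / V) ^ 2) false
        (mlpLayer (fun (_ : Fin 1) (_ : Fin V) => 1) (fun _ => 0) false
          (mlpLayer (selMat id) (fun _ => -1) true t))
    y u < y (f X) := by
  have hVR : (0 : ℝ) < V := by exact_mod_cast hV
  have h1 : ∀ v, mlpLayer (selMat id) (fun _ => -1) true t v
      = if v = X then ((f X : ℕ) + 1 : ℝ) / V else 0 := by
    intro v
    simp only [mlpLayer, selMat_mulVec, ht, id, if_true]
    by_cases h : v = X
    · subst h
      simp only [if_true]
      rw [max_eq_right]
      · ring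
      · have : (0 : ℝ) ≤ ((f v : ℕ) + 1 : ℝ) / V := by positivity
        linarith
    · simp only [h, if_false]
      rw [max_eq_left]
      have : ((f v : ℕ) + 1 : ℝ) / V ≤ 1 := by
        rw [div_le_one hVR]
        exact_mod_cast (f v).isLt
      linarith
  have h2 : mlpLayer (fun (_ : Fin 1) (_ : Fin V) => (1 : ℝ)) (fun _ => 0) false
      (mlpLayer (selMat id) (fun _ => -1) true t) = fun _ => ((f X : ℕ) + 1 : ℝ) / V := by
    funext r
    generalize mlpLayer (selMat id) (fun _ => -1) true t = g at h1
    simp [mlpLayer, Matrix.mulVec, dotProduct, h1]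
  intro y
  have hy : ∀ w : Fin V, y w = 2 * (((w : ℕ) + 1 : ℝ) / V) * (((f X : ℕ) + 1 : ℝ) / V)
      + - (((w : ℕ) + 1 : ℝ) / V) ^ 2 := by
    intro w
    simp only [y]
    rw [h2]
    simp [mlpLayer, Matrix.mulVec, dotProduct]
  rw [hy, hy]
  have hne : (((u : ℕ) + 1 : ℝ) / V) - (((f X : ℕ) + 1 : ℝ) / V) ≠ 0 := by
    intro h
    apply hu
    rw [← sub_div, div_eq_zero_iff] at h
    rcases h with h | h
    · apply Fin.ext
      have : ((u : ℕ) : ℝ) = ((f X : ℕ) : ℝ) := by linarith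
      exact_mod_cast this
    · exact absurd h hVR.ne'
  have := pow_pos (abs_pos.mpr hne) 2
  rw [sq_abs] at this
  nlinarith

/-- **Conditional generation of longer responses (`n_X = 1`, `n_Y = N₀`) with `N₀` virtual
tokens.** For any `V, N₀ > 0` there is a transformer with vocabulary size `V`, context size
`N = 2N₀`, embedding size `d_e = V`, one attention layer with two heads and a three-layer MLP
such that for every map `m : {1,...,V} → {1,...,V}^{N₀}` and user token `X`, greedy
autoregressive generation after the `N₀` virtual tokens `s_i = (m(1)_i/V, ..., m(V)_i/V)`
(tokens `0`-indexed as `Fin V`, so `((m v i : ℕ)+1)/V` stands for `m(v)_i/V`) followed by the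
embedding of `X` produces exactly `(m(X)_1, ..., m(X)_{N₀})`: at each step `i`, with input
consisting of the virtual tokens, the embedding of `X` and the embeddings of
`m(X)_1, ..., m(X)_{i−1}`, the logits at the last position attain their strict maximum at
`m X i`. -/
theorem virtual_tokens_longer_conditional_generation (V N0 : ℕ) (hV : 0 < V) (hN0 : 0 < N0) :
    ∃ (k dout d1 d2 : ℕ) (T : ℝ), 0 < T ∧
    ∃ (E : Matrix (Fin V) (Fin V) ℝ)
      (Wq Wk : Fin 2 → Matrix (Fin k) (Fin (V + (N0 + N0))) ℝ)
      (Wv : Fin 2 → Matrix (Fin dout) (Fin (V + (N0 + N0))) ℝ)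
      (M1 : Matrix (Fin d1) (Fin dout) ℝ) (b1 : Fin d1 → ℝ) (a1 : Bool)
      (M2 : Matrix (Fin d2) (Fin d1) ℝ) (b2 : Fin d2 → ℝ) (a2 : Bool)
      (M3 : Matrix (Fin V) (Fin d2) ℝ) (b3 : Fin V → ℝ) (a3 : Bool),
    ∀ (m : Fin V → Fin N0 → Fin V) (X : Fin V) (i : Fin N0),
      let emb : Fin (N0 + 1 + (i : ℕ)) → Fin V → ℝ := fun j =>
        if h1 : (j : ℕ) < N0 then (fun v => ((m v ⟨(j : ℕ), h1⟩ : ℕ) + 1 : ℝ) / V)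
        else if h2 : (j : ℕ) = N0 then (fun n => E n X)
        else (fun n => E n (m X ⟨(j : ℕ) - N0 - 1, by
          have := j.isLt; have := i.isLt; omega⟩))
      let x : Fin (N0 + 1 + (i : ℕ)) → Fin (V + (N0 + N0)) → ℝ :=
        fun j => Fin.append (emb j) (posEnc (N0 + N0) (j : ℕ))
      let logits : Fin V → ℝ :=
        mlpLayer M3 b3 a3 (mlpLayer M2 b2 a2 (mlpLayer M1 b1 a1
          (attnBlock T Wq Wk Wv x ⟨N0 + (i : ℕ), by omega⟩)))
      ∀ u : Fin V, u ≠ m X i → logits u < logits (m X i) := by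
  let Wq : Fin 2 → Matrix (Fin N0) (Fin (V + (N0 + N0))) ℝ := fun _ =>
    selMat (fun a => Fin.natAdd V (Fin.natAdd N0 a))
  let Wk : Fin 2 → Matrix (Fin N0) (Fin (V + (N0 + N0))) ℝ := fun h =>
    selMat (fun a => Fin.natAdd V (if h = 0 then Fin.castAdd N0 a else Fin.natAdd N0 ⟨0, hN0⟩))
  let Wv : Fin 2 → Matrix (Fin V) (Fin (V + (N0 + N0))) ℝ := fun _ =>
    selMat (fun v => Fin.castAdd (N0 + N0) v)
  suffices H : ∀ᶠ T : ℝ in Filter.atTop, 0 < T ∧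
      ∀ (m : Fin V → Fin N0 → Fin V) (X : Fin V) (i : Fin N0),
      let emb : Fin (N0 + 1 + (i : ℕ)) → Fin V → ℝ := fun j =>
        if h1 : (j : ℕ) < N0 then (fun v => ((m v ⟨(j : ℕ), h1⟩ : ℕ) + 1 : ℝ) / V)
        else if h2 : (j : ℕ) = N0 then (fun n => (selMat id : Matrix (Fin V) (Fin V) ℝ) n X)
        else (fun n => (selMat id : Matrix (Fin V) (Fin V) ℝ) n (m X ⟨(j : ℕ) - N0 - 1, by
          have := j.isLt; have := i.isLt; omega⟩))
      let x : Fin (N0 + 1 + (i : ℕ)) → Fin (V + (N0 + N0)) → ℝ :=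
        fun j => Fin.append (emb j) (posEnc (N0 + N0) (j : ℕ))
      let logits : Fin V → ℝ :=
        mlpLayer (fun (u : Fin V) (_ : Fin 1) => 2 * (((u : ℕ) + 1 : ℝ) / V))
          (fun u => - (((u : ℕ) + 1 : ℝ) / V) ^ 2) false
          (mlpLayer (fun (_ : Fin 1) (_ : Fin V) => 1) (fun _ => 0) false
            (mlpLayer (selMat id) (fun _ => -1) true
          (attnBlock T Wq Wk Wv x ⟨N0 + (i : ℕ), by omega⟩)))
      ∀ u : Fin V, u ≠ m X i → logits u < logits (m X i) by
    obtain ⟨T, hT, hm⟩ := H.exists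
    exact ⟨N0, V, V, 1, T, hT, selMat id, Wq, Wk, Wv, _, _, _, _, _, _, _, _, _, hm⟩
  refine (Filter.eventually_gt_atTop 0).and ?_
  refine Filter.eventually_all.2 fun m => Filter.eventually_all.2 fun X =>
    Filter.eventually_all.2 fun i => ?_
  let emb : Fin (N0 + 1 + (i : ℕ)) → Fin V → ℝ := fun j =>
        if h1 : (j : ℕ) < N0 then (fun v => ((m v ⟨(j : ℕ), h1⟩ : ℕ) + 1 : ℝ) / V)
        else if h2 : (j : ℕ) = N0 then (fun n => (selMat id : Matrix (Fin V) (Fin V) ℝ) n X)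
        else (fun n => (selMat id : Matrix (Fin V) (Fin V) ℝ) n (m X ⟨(j : ℕ) - N0 - 1, by
          have := j.isLt; have := i.isLt; omega⟩))
  let x : Fin (N0 + 1 + (i : ℕ)) → Fin (V + (N0 + N0)) → ℝ :=
        fun j => Fin.append (emb j) (posEnc (N0 + N0) (j : ℕ))
  refine Filter.eventually_all.2 fun u => ?_
  by_cases hu : u = m X i
  · exact Filter.Eventually.of_forall fun T h => absurd hu h
  have hpos : ∀ (j : Fin (N0 + 1 + (i : ℕ))) (n : Fin (N0 + N0)),
      x j (Fin.natAdd V n) = if (n : ℕ) = (j : ℕ) then 1 else 0 := by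
    intro j n
    simp [x, posEnc]
  let q : Fin (N0 + 1 + (i : ℕ)) := ⟨N0 + (i : ℕ), by omega⟩
  let j0 : Fin 2 → Fin (N0 + 1 + (i : ℕ)) := fun h =>
    if h = 0 then ⟨(i : ℕ), by omega⟩ else ⟨N0, by omega⟩
  have hs : ∀ h j, (Wq h).mulVec (x q) ⬝ᵥ (Wk h).mulVec (x j)
      = if j = j0 h then 1 else 0 := by
    intro h j
    simp only [Wq, Wk, dotProduct, selMat_mulVec, hpos, q]
    rw [Finset.sum_eq_single i]
    · by_cases h0 : h = 0
      · simp only [h0, j0, if_true, if_false, Fin.ext_iff, Fin.val_natAdd, Fin.val_castAdd, one_mul,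
          Nat.add_zero]
        split_ifs <;> first | rfl | omega | (exfalso; simp_all; done) | grind
      · simp only [h0, j0, if_true, if_false, Fin.ext_iff, Fin.val_natAdd, Fin.val_castAdd, one_mul,
          Nat.add_zero]
        split_ifs <;> first | rfl | omega | (exfalso; simp_all; done) | grind
    · intro b _ hb
      have : ¬ ((b : ℕ) = (i : ℕ)) := fun h => hb (Fin.ext h)
      rw [if_neg, zero_mul]
      simp only [Fin.val_natAdd]
      omega
    · simp
  have hlim := attnBlock_tendsto hN0 Wq Wk Wv x q j0 hs
  have hdec := mlp_decode V hV (fun v => m v i) X u hu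
    ((Wv 0).mulVec (x (j0 0)) + (Wv 1).mulVec (x (j0 1))) (by
      intro v
      simp [Wv, selMat_mulVec, x, j0, emb, selMat, eq_comm])
  have hc := (mlpLayer_continuous (fun (u : Fin V) (_ : Fin 1) => 2 * (((u : ℕ) + 1 : ℝ) / V))
      (fun u => - (((u : ℕ) + 1 : ℝ) / V) ^ 2) false).comp
    ((mlpLayer_continuous (fun (_ : Fin 1) (_ : Fin V) => (1 : ℝ)) (fun _ => 0) false).comp
      (mlpLayer_continuous (selMat (id : Fin V → Fin V)) (fun _ => -1) true))
  have hl := (hc.tendsto _).comp hlim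
  have hlu := tendsto_pi_nhds.1 hl
  filter_upwards [(hlu u).eventually_lt (hlu (m X i)) hdec] with T hT _
  exact hT
end

section
/- For every vocabulary size V > 0, there exist a transformer (of the simplified decoder-only form described in the context, but with two attention blocks, each followed by a per-position MLP) with vocabulary size V, context size N = 4, embedding dimension d_e = V, an inverse temperature T > 0, such that for every map m : {1,...,V} × {1,...,V} → {1,...,V} and all user tokens X_1, X_2 ∈ {1,...,V}, when the input consists of the zero virtual token at position 1, the virtual token s_1 whose f-th coordinate is Σ_{i=1}^V m(f,i)·V^{i−1}/V^V at position 2, the embedding of X_1 at position 3, and the embedding of X_2 at position 4, the argmax of the output logits at position 4 equals m(X_1, X_2). Thus a single virtual token can specify an arbitrary map from two user input tokens to a response token. -/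
open Matrix Real

/-- A per-position MLP built from linear layers with bias, each optionally ReLU-activated. -/
inductive MLP : ℕ → ℕ → Type
  | layer {a b : ℕ} (M : Matrix (Fin b) (Fin a) ℝ) (bias : Fin b → ℝ) (act : Bool) : MLP a b
  | comp {a b c : ℕ} (f : MLP a b) (g : MLP b c) : MLP a c

/-- Evaluation of an MLP. -/
noncomputable def MLP.eval : {a b : ℕ} → MLP a b → (Fin a → ℝ) → (Fin b → ℝ)
  | _, _, .layer M bias act, x =>
      fun u => if act then max 0 (M.mulVec x u + bias u) else M.mulVec x u + bias u
  | _, _, .comp f g, x => g.eval (f.eval x)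

lemma exists_scale {ι : Type*} [Fintype ι] {n : ℕ} (t : ι → Fin n → ℝ) :
    ∃ C : ℝ, ∀ i j, t i ≠ t j → 1 ≤ C * ∑ c, |t j c - t i c| := by
  classical
  refine ⟨∑ p : ι × ι, 1 / ∑ c, |t p.2 c - t p.1 c|, fun i j hij => ?_⟩
  have hD : 0 < ∑ c, |t j c - t i c| := by
    obtain ⟨c, hc⟩ := Function.ne_iff.mp hij
    refine Finset.sum_pos' (fun _ _ => abs_nonneg _) ⟨c, Finset.mem_univ _, ?_⟩
    exact abs_pos.mpr (sub_ne_zero.mpr (Ne.symm hc))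
  have h1 : 1 / ∑ c, |t j c - t i c| ≤ ∑ p : ι × ι, 1 / ∑ c, |t p.2 c - t p.1 c| :=
    Finset.single_le_sum (f := fun p : ι × ι => 1 / ∑ c, |t p.2 c - t p.1 c|)
      (fun p _ => by positivity) (Finset.mem_univ (i, j))
  calc (1 : ℝ) = 1 / (∑ c, |t j c - t i c|) * ∑ c, |t j c - t i c| := by field_simp
    _ ≤ _ := by gcongr

lemma exists_bump {ι : Type*} [Fintype ι] {n : ℕ} (t : ι → Fin n → ℝ) (C : ℝ) :
    ∃ (b : ℕ) (f : MLP n b) (e : ι ≃ Fin b), ∀ x i,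
      f.eval x (e i) = max 0 (1 - C * ∑ c, |x c - t i c|) := by
  classical
  let e1 := Fintype.equivFin (ι × Fin n × Bool)
  let e := Fintype.equivFin ι
  let sg : Bool → ℝ := fun b => if b then 1 else -1
  let L1 : MLP n (Fintype.card (ι × Fin n × Bool)) :=
    .layer (fun r c => if c = (e1.symm r).2.1 then sg (e1.symm r).2.2 else 0)
      (fun r => - sg (e1.symm r).2.2 * t (e1.symm r).1 (e1.symm r).2.1) true
  let L2 : MLP (Fintype.card (ι × Fin n × Bool)) (Fintype.card ι) :=
    .layer (fun r c => if (e1.symm c).1 = e.symm r then -C else 0) (fun _ => 1) true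
  refine ⟨_, .comp L1 L2, e, fun x i => ?_⟩
  have h1 : ∀ p, L1.eval x (e1 p) = max 0 (sg p.2.2 * (x p.2.1 - t p.1 p.2.1)) := by
    intro p
    simp only [L1, MLP.eval, Matrix.mulVec, dotProduct, Equiv.symm_apply_apply, ite_mul, zero_mul,
      Finset.sum_ite_eq', Finset.mem_univ, if_true]
    congr 1; ring
  show L2.eval (L1.eval x) (e i) = _
  simp only [L2, MLP.eval, Matrix.mulVec, dotProduct, Equiv.symm_apply_apply, if_true]
  rw [← Equiv.sum_comp e1]
  simp only [h1, Equiv.symm_apply_apply, Fintype.sum_prod_type, ite_mul, zero_mul,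
    Fintype.sum_bool]
  have h2 : ∀ z : ℝ, max 0 z + max 0 (-z) = |z| := by
    intro z
    rcases le_total 0 z with h | h
    · rw [max_eq_right h, max_eq_left (by linarith), abs_of_nonneg h, add_zero]
    · rw [max_eq_left h, max_eq_right (by linarith), abs_of_nonpos h, zero_add]
  have h3 : ∀ a : ι, (∑ c : Fin n, ((if a = i then -C * max 0 (sg true * (x c - t a c)) else 0)
      + (if a = i then -C * max 0 (sg false * (x c - t a c)) else 0)))
      = if a = i then -C * ∑ c, |x c - t a c| else 0 := by
    intro a
    split_ifs with ha
    · rw [Finset.mul_sum]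
      refine Finset.sum_congr rfl fun c _ => ?_
      rw [← h2 (x c - t a c)]
      simp only [sg, if_true, Bool.false_eq_true, if_false, one_mul, neg_one_mul]
      ring
    · simp
  simp only [h3, Finset.sum_ite_eq', Finset.mem_univ, if_true]
  congr 1; ring

lemma exists_interp {ι : Type*} [Fintype ι] {n V : ℕ} (t : ι → Fin n → ℝ) (g : ι → Fin V)
    (h : ∀ i j, t i = t j → g i = g j) :
    ∃ f : MLP n V, ∀ j u, u ≠ g j → f.eval (t j) u < f.eval (t j) (g j) := by
  classical
  obtain ⟨C, hC⟩ := exists_scale t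
  obtain ⟨b, f, e, hf⟩ := exists_bump t C
  let L : MLP b V := .layer (fun u c => if g (e.symm c) = u then 1 else 0) 0 false
  refine ⟨.comp f L, fun j u hu => ?_⟩
  have key : ∀ u, (MLP.comp f L).eval (t j) u =
      ∑ i, if g i = u then max 0 (1 - C * ∑ c, |t j c - t i c|) else 0 := by
    intro u
    show L.eval (f.eval (t j)) u = _
    simp only [L, MLP.eval, Matrix.mulVec, dotProduct, Bool.false_eq_true, if_false,
      Pi.zero_apply, add_zero]
    rw [← Equiv.sum_comp e]
    simp only [Equiv.symm_apply_apply, hf, ite_mul, one_mul, zero_mul]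
  rw [key, key]
  have h0 : (∑ i, if g i = u then max 0 (1 - C * ∑ c, |t j c - t i c|) else 0) = 0 := by
    refine Finset.sum_eq_zero fun i _ => ?_
    split_ifs with hi
    · apply max_eq_left
      have : t i ≠ t j := fun hh => hu (by rw [← hi, h i j hh])
      linarith [hC i j this]
    · rfl
  rw [h0]
  refine Finset.sum_pos' (fun i _ => by split_ifs <;> simp) ⟨j, Finset.mem_univ _, ?_⟩
  simp

lemma attn_uniform {d : ℕ} (T : ℝ) (y : Fin 4 → Fin d → ℝ) (z : Fin d → ℝ) (hy : ∀ i, y i = z)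
    (i : Fin 4) :
    attnBlock (k := 0) (H := 1) T (fun _ => 0) (fun _ => 0) (fun _ => 1) y i = z := by
  ext u
  simp [attnBlock, headAttn, hy]

lemma append_dot {V : ℕ} (a a' : Fin V → ℝ) (b b' : Fin 4 → ℝ) :
    Fin.append a b ⬝ᵥ Fin.append a' b' = a ⬝ᵥ a' + b ⬝ᵥ b' := by
  simp [dotProduct, Fin.sum_univ_add]

lemma attn_first {V : ℕ} (a : Fin 4 → Fin V → ℝ) (x : Fin 4 → Fin (V + 4) → ℝ)
    (hx : ∀ i : Fin 4, x i = Fin.append (a i) (posEnc 4 i)) (i : Fin 4) :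
    attnBlock (k := 1) (H := 1) 1
      (fun _ _ => Fin.append (fun _ : Fin V => (0 : ℝ)) (fun _ : Fin 4 => (1 : ℝ)))
      (fun _ _ => Fin.append (fun _ : Fin V => (0 : ℝ)) (![0, 0, 0, Real.log 2] : Fin 4 → ℝ))
      (fun _ r => Fin.append (Pi.single r 1 : Fin V → ℝ) (fun _ : Fin 4 => (0 : ℝ))) x i
      = (1 / 5 : ℝ) • (a 0 + a 1 + a 2 + (2 : ℝ) • a 3) := by
  have hq : ∀ i, (fun _ : Fin 4 => (1 : ℝ)) ⬝ᵥ posEnc 4 (i : Fin 4) = 1 := by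
    intro i; fin_cases i <;> norm_num [dotProduct, Fin.sum_univ_four, posEnc, -Finset.sum_boole]
  have hk : ∀ i, (![0, 0, 0, Real.log 2] : Fin 4 → ℝ) ⬝ᵥ posEnc 4 (i : Fin 4)
      = (![0, 0, 0, Real.log 2] : Fin 4 → ℝ) i := by
    intro i; fin_cases i <;> simp [dotProduct, Fin.sum_univ_four, posEnc]
  ext u
  have z1 : ∀ v : Fin V → ℝ, (fun _ : Fin V => (0 : ℝ)) ⬝ᵥ v = 0 := fun v => by simp [dotProduct]
  have z2 : ∀ v : Fin 4 → ℝ, (fun _ : Fin 4 => (0 : ℝ)) ⬝ᵥ v = 0 := fun v => by simp [dotProduct]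
  have d1 : ∀ v w : Fin 1 → ℝ, v ⬝ᵥ w = v 0 * w 0 := fun v w => by simp [dotProduct]
  simp only [attnBlock, headAttn, d1, Finset.univ_unique, Finset.sum_singleton, Finset.sum_apply,
    Pi.smul_apply, Matrix.mulVec, hx, append_dot, hq, hk, z1, z2, single_dotProduct, smul_eq_mul,
    Fin.sum_univ_four, Pi.add_apply]
  simp [Real.exp_log]
  ring

lemma s_digits {V : ℕ} (hV : 0 < V) (d d' : Fin V → Fin V)
    (h : (∑ i : Fin V, ((d i : ℕ) + 1 : ℝ) * (V : ℝ) ^ (i : ℕ)) / (V : ℝ) ^ V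
      = (∑ i : Fin V, ((d' i : ℕ) + 1 : ℝ) * (V : ℝ) ^ (i : ℕ)) / (V : ℝ) ^ V) : d = d' := by
  have hVR : (0 : ℝ) < (V : ℝ) ^ V := by positivity
  rw [div_left_inj' hVR.ne'] at h
  simp only [add_mul, Finset.sum_add_distrib, add_left_inj] at h
  apply (finFunctionFinEquiv (m := V) (n := V)).injective
  apply Fin.ext
  simp only [finFunctionFinEquiv_apply]
  exact_mod_cast h

lemma s_bound {V : ℕ} (hV : 0 < V) (d : Fin V → Fin V) :
    0 ≤ (∑ i : Fin V, ((d i : ℕ) + 1 : ℝ) * (V : ℝ) ^ (i : ℕ)) / (V : ℝ) ^ V ∧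
    (∑ i : Fin V, ((d i : ℕ) + 1 : ℝ) * (V : ℝ) ^ (i : ℕ)) / (V : ℝ) ^ V < (V : ℝ) * V + 1 := by
  have hVR : (0 : ℝ) < (V : ℝ) ^ V := by positivity
  refine ⟨by positivity, ?_⟩
  have : (∑ i : Fin V, ((d i : ℕ) + 1 : ℝ) * (V : ℝ) ^ (i : ℕ)) / (V : ℝ) ^ V ≤ (V : ℝ) * V := by
    rw [div_le_iff₀ hVR]
    calc _ ≤ ∑ i : Fin V, (V : ℝ) * (V : ℝ) ^ V := by
          refine Finset.sum_le_sum fun i _ => ?_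
          have h1 : ((d i : ℕ) + 1 : ℝ) ≤ V := by exact_mod_cast (d i).isLt
          have h2 : (V : ℝ) ^ (i : ℕ) ≤ (V : ℝ) ^ V :=
            pow_le_pow_right₀ (by exact_mod_cast hV) i.isLt.le
          gcongr
      _ = _ := by simp; ring
  linarith

lemma nat_sep {c s s' : ℝ} {n n' : ℕ} (h0 : 0 ≤ s) (h1 : s < c) (h0' : 0 ≤ s') (h1' : s' < c)
    (h : s + c * n = s' + c * n') : n = n' := by
  have hc : 0 < c := by linarith
  rcases lt_trichotomy n n' with hl | hl | hl
  · have : (n : ℝ) + 1 ≤ n' := by exact_mod_cast hl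
    nlinarith
  · exact hl
  · have : (n' : ℝ) + 1 ≤ n := by exact_mod_cast hl
    nlinarith

/-- **A single virtual token can specify an arbitrary map from two user tokens to a response
(`n_X = 2`, `n_Y = 1`).** For any `V > 0` there is a transformer with vocabulary size `V`,
context size `N = 4`, embedding size `d_e = V`, two attention blocks each followed by a
per-position MLP, and an inverse temperature `T > 0` such that for every map
`m : {1,...,V}² → {1,...,V}` and user tokens `X₁, X₂`, with input consisting of the zero virtual
token, the virtual token `s₁` with `f`-th coordinate `Σ_{i=1}^V m(f,i) V^{i−1} / V^V` (tokens
`0`-indexed as `Fin V`, so `(m f i : ℕ) + 1` stands for `m(f,i)`), the embedding of `X₁` and the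
embedding of `X₂`, the output logits at the last position attain their strict maximum at
`m X₁ X₂`. -/
theorem virtual_token_two_user_tokens (V : ℕ) (hV : 0 < V) :
    ∃ (k1 k2 dout1 dmid dout2 H1 H2 : ℕ) (T : ℝ), 0 < T ∧
    ∃ (E : Matrix (Fin V) (Fin V) ℝ)
      (Wq1 Wk1 : Fin H1 → Matrix (Fin k1) (Fin (V + 4)) ℝ)
      (Wv1 : Fin H1 → Matrix (Fin dout1) (Fin (V + 4)) ℝ)
      (mlp1 : MLP dout1 dmid)
      (Wq2 Wk2 : Fin H2 → Matrix (Fin k2) (Fin dmid) ℝ)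
      (Wv2 : Fin H2 → Matrix (Fin dout2) (Fin dmid) ℝ)
      (mlp2 : MLP dout2 V),
    ∀ (m : Fin V → Fin V → Fin V) (X1 X2 : Fin V),
      let s1 : Fin V → ℝ := fun f =>
        (∑ i : Fin V, ((m f i : ℕ) + 1 : ℝ) * (V : ℝ) ^ (i : ℕ)) / (V : ℝ) ^ V
      let x : Fin 4 → Fin (V + 4) → ℝ :=
        ![Fin.append (fun _ : Fin V => (0 : ℝ)) (posEnc 4 0),
          Fin.append s1 (posEnc 4 1),
          Fin.append (fun n => E n X1) (posEnc 4 2),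
          Fin.append (fun n => E n X2) (posEnc 4 3)]
      let y1 : Fin 4 → Fin dmid → ℝ := fun i => mlp1.eval (attnBlock T Wq1 Wk1 Wv1 x i)
      let logits : Fin V → ℝ := mlp2.eval (attnBlock T Wq2 Wk2 Wv2 y1 3)
      ∀ u : Fin V, u ≠ m X1 X2 → logits u < logits (m X1 X2) := by
  classical
  let c : ℝ := (V : ℝ) * V + 1
  let E : Matrix (Fin V) (Fin V) ℝ := fun n X => if n = X then c else 0
  let S : (Fin V → Fin V → Fin V) → Fin V → ℝ := fun m f =>
        (∑ i : Fin V, ((m f i : ℕ) + 1 : ℝ) * (V : ℝ) ^ (i : ℕ)) / (V : ℝ) ^ V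
  let t : (Fin V → Fin V → Fin V) × Fin V × Fin V → Fin V → ℝ := fun p =>
    (1 / 5 : ℝ) • ((fun _ => 0) + S p.1 + (fun n => E n p.2.1) + (2 : ℝ) • (fun n => E n p.2.2))
  obtain ⟨f, hf⟩ := exists_interp t (fun p => p.1 p.2.1 p.2.2) (by
    rintro ⟨m, X1, X2⟩ ⟨m', Y1, Y2⟩ h
    have h5 : ∀ u, S m u + c * (((if u = X1 then 1 else 0) + 2 * (if u = X2 then 1 else 0) : ℕ) : ℝ)
        = S m' u + c * (((if u = Y1 then 1 else 0) + 2 * (if u = Y2 then 1 else 0) : ℕ) : ℝ) := by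
      intro u
      have := congrFun h u
      simp only [t, E, Pi.smul_apply, Pi.add_apply, smul_eq_mul] at this
      push_cast
      simp only [← mul_boole _ c] at this
      linarith
    have hn := fun u => nat_sep (s_bound hV (m u)).1 (s_bound hV (m u)).2
      (s_bound hV (m' u)).1 (s_bound hV (m' u)).2 (h5 u)
    have e2 : X2 = Y2 := by
      have := hn X2
      by_contra hne
      simp only [if_true, hne, if_false] at this
      split_ifs at this <;> omega
    have e1 : X1 = Y1 := by
      have := hn X1
      by_contra hne
      simp only [if_true, hne, if_false] at this
      split_ifs at this <;> omega
    subst e1 e2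
    have : m X1 = m' X1 := s_digits hV _ _ (add_right_cancel (h5 X1))
    simp [this])
  refine ⟨1, 0, V, V, V, 1, 1, 1, one_pos, E,
    fun _ _ => Fin.append (fun _ : Fin V => (0 : ℝ)) (fun _ : Fin 4 => (1 : ℝ)),
    fun _ _ => Fin.append (fun _ : Fin V => (0 : ℝ)) (![0, 0, 0, Real.log 2] : Fin 4 → ℝ),
    fun _ r => Fin.append (Pi.single r 1 : Fin V → ℝ) (fun _ : Fin 4 => (0 : ℝ)),
    f, fun _ => 0, fun _ => 0, fun _ => 1,
    .layer 1 0 false, ?_⟩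
  intro m X1 X2 s1 x y1 logits u hu
  have hy : ∀ i, y1 i = f.eval (t (m, X1, X2)) := by
    intro i
    refine congrArg f.eval ?_
    exact attn_first ![fun _ => 0, S m, fun n => E n X1, fun n => E n X2] x
      (by intro i; fin_cases i <;> rfl) i
  have hl : logits = f.eval (t (m, X1, X2)) := by
    have := attn_uniform 1 y1 _ hy 3
    simp only [logits, this, MLP.eval]
    ext u; simp
  rw [hl]
  exact hf (m, X1, X2) u hu
end

section
/- Let c > 0, H ∈ ℝ^{d×d}, W_V ∈ ℝ^{m×d}, let x_1, ..., x_p ∈ ℝ^d be content inputs and s ∈ ℝ^d a prefix vector. Define the pretrained attention A_{ij} = exp(c·x_iᵀHx_j) / Σ_{r=1}^p exp(c·x_iᵀHx_r) and pretrained attention output t_i = Σ_{j=1}^p A_{ij} W_V x_j, and the prefix-tuned attention A^pt_{i0} = exp(c·x_iᵀHs)/D_i, A^pt_{ij} = exp(c·x_iᵀHx_j)/D_i with D_i = exp(c·x_iᵀHs) + Σ_{r=1}^p exp(c·x_iᵀHx_r), and prefix-tuned output t^pt_i = A^pt_{i0} W_V s + Σ_{j=1}^p A^pt_{ij} W_V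 x_j. Then for every position i: t^pt_i = A^pt_{i0}·W_V s + (1 − A^pt_{i0})·t_i, with A^pt_{i0} ∈ (0,1). That is, the prefix-tuned output is a strict convex combination of the pretrained output t_i and the constant vector W_V s, which is independent of the content (x_1,...,x_p); the prefix can only bias the attention output towards the fixed direction W_V s. -/
open Matrix Real

/-- **A single prefix vector only biases the attention block output in a fixed direction.**
With pretrained attention output `t_i = Σ_j A_{ij} W_V x_j` and prefix-tuned output
`t^pt_i = A^pt_{i0} W_V s + Σ_j A^pt_{ij} W_V x_j`, for every position `i` we have
`t^pt_i = A^pt_{i0} W_V s + (1 − A^pt_{i0}) t_i` with `A^pt_{i0} ∈ (0,1)`: the prefix-tuned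
output is a strict convex combination of the pretrained output and the constant vector `W_V s`,
which is independent of the content. -/
theorem prefix_biases_attention_output {d m p : ℕ} (hp : 0 < p) (c : ℝ) (hc : 0 < c)
    (H : Matrix (Fin d) (Fin d) ℝ) (Wv : Matrix (Fin m) (Fin d) ℝ)
    (x : Fin p → Fin d → ℝ) (s : Fin d → ℝ) (i : Fin p) :
    let A : Fin p → ℝ := fun j =>
      exp (c * (x i ⬝ᵥ H.mulVec (x j))) / ∑ r, exp (c * (x i ⬝ᵥ H.mulVec (x r)))
    let D : ℝ := exp (c * (x i ⬝ᵥ H.mulVec s)) + ∑ r, exp (c * (x i ⬝ᵥ H.mulVec (x r)))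
    let Apt0 : ℝ := exp (c * (x i ⬝ᵥ H.mulVec s)) / D
    let Apt : Fin p → ℝ := fun j => exp (c * (x i ⬝ᵥ H.mulVec (x j))) / D
    let t : Fin m → ℝ := ∑ j, A j • Wv.mulVec (x j)
    let tpt : Fin m → ℝ := Apt0 • Wv.mulVec s + ∑ j, Apt j • Wv.mulVec (x j)
    tpt = Apt0 • Wv.mulVec s + (1 - Apt0) • t ∧ Apt0 ∈ Set.Ioo (0 : ℝ) 1 := by
  intro A D Apt0 Apt t tpt
  have hS : 0 < ∑ r, exp (c * (x i ⬝ᵥ H.mulVec (x r))) :=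
    Finset.sum_pos (fun r _ => exp_pos _) ⟨i, Finset.mem_univ i⟩
  have hE : 0 < exp (c * (x i ⬝ᵥ H.mulVec s)) := exp_pos _
  have hD : 0 < D := add_pos hE hS
  have key : ∀ j, Apt j = (1 - Apt0) * A j := by
    intro j
    have h1 : 1 - Apt0 = (∑ r, exp (c * (x i ⬝ᵥ H.mulVec (x r)))) / D := by
      rw [eq_div_iff hD.ne', sub_mul, div_mul_cancel₀ _ hD.ne', one_mul]
      exact add_sub_cancel_left _ _
    rw [h1]
    change _ / D = _ / D * (_ / _)
    field_simp
  refine ⟨?_, div_pos hE hD, (div_lt_one hD).2 (lt_add_of_pos_right _ hS)⟩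
  change _ + _ = _ + _ • ∑ j, A j • Wv.mulVec (x j)
  rw [Finset.smul_sum]
  congr 1
  refine Finset.sum_congr rfl fun j _ => ?_
  rw [key j, mul_smul]
end

section
/- Let c > 0, H ∈ ℝ^{d×d}, W_V ∈ ℝ^{m×d}, let x_1, ..., x_p ∈ ℝ^d be content inputs and s_1, ..., s_{n_S} ∈ ℝ^d prefix vectors. Define the pretrained attention A_{ij} = exp(c·x_iᵀHx_j) / Σ_{r=1}^p exp(c·x_iᵀHx_r), pretrained attention output t_i = Σ_{j=1}^p A_{ij} W_V x_j, the prefix-tuned attention with denominator D_i = Σ_{k=1}^{n_S} exp(c·x_iᵀHs_k) + Σ_{r=1}^p exp(c·x_iᵀHx_r) (namely A^pt_{i,S_k} = exp(c·x_iᵀHs_k)/D_i and A^pt_{ij} = exp(c·x_iᵀHx_j)/D_i), and prefix-tuned output t^pt_i = Σ_{k=1}^{n_S} A^pt_{i,S_k} W_V s_k + Σ_{j=1}^p A^pt_{ij} W_V x_j. Then for every position i: t^pt_i = Σ_{k=1}^{n_S} A^pt_{i,S_k}·W_V s_k + (1 − Σ_{k=1}^{n_S} A^pt_{i,S_k})·t_i.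 Consequently the difference t^pt_i − t_i lies in the linear span of the n_S + 1 vectors W_V s_1, ..., W_V s_{n_S}, t_i; the prefix-induced change of the attention output is confined to a subspace determined by the prefix of dimension at most n_S + 1. -/
open Matrix Real

/-- **A prefix of length `n_S` confines the change of the attention output to a small subspace.**
With pretrained output `t_i = Σ_j A_{ij} W_V x_j` and prefix-tuned output
`t^pt_i = Σ_k A^pt_{i,S_k} W_V s_k + Σ_j A^pt_{ij} W_V x_j`, we have
`t^pt_i = Σ_k A^pt_{i,S_k} W_V s_k + (1 − Σ_k A^pt_{i,S_k}) t_i`; consequently `t^pt_i − t_i`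
lies in the span of the `n_S + 1` vectors `W_V s_1, ..., W_V s_{n_S}, t_i`. -/
theorem long_prefix_biases_attention_output {d m p nS : ℕ} (hp : 0 < p) (c : ℝ) (hc : 0 < c)
    (H : Matrix (Fin d) (Fin d) ℝ) (Wv : Matrix (Fin m) (Fin d) ℝ)
    (x : Fin p → Fin d → ℝ) (s : Fin nS → Fin d → ℝ) (i : Fin p) :
    let A : Fin p → ℝ := fun j =>
      exp (c * (x i ⬝ᵥ H.mulVec (x j))) / ∑ r, exp (c * (x i ⬝ᵥ H.mulVec (x r)))
    let D : ℝ := (∑ k, exp (c * (x i ⬝ᵥ H.mulVec (s k))))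
      + ∑ r, exp (c * (x i ⬝ᵥ H.mulVec (x r)))
    let AptS : Fin nS → ℝ := fun k => exp (c * (x i ⬝ᵥ H.mulVec (s k))) / D
    let Apt : Fin p → ℝ := fun j => exp (c * (x i ⬝ᵥ H.mulVec (x j))) / D
    let t : Fin m → ℝ := ∑ j, A j • Wv.mulVec (x j)
    let tpt : Fin m → ℝ := (∑ k, AptS k • Wv.mulVec (s k)) + ∑ j, Apt j • Wv.mulVec (x j)
    tpt = (∑ k, AptS k • Wv.mulVec (s k)) + (1 - ∑ k, AptS k) • t ∧
      tpt - t ∈ Submodule.span ℝ (insert t (Set.range fun k => Wv.mulVec (s k))) := by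
  intro A D AptS Apt t tpt
  have hX : 0 < ∑ r, exp (c * (x i ⬝ᵥ H.mulVec (x r))) :=
    Finset.sum_pos (fun r _ => exp_pos _) ⟨i, Finset.mem_univ i⟩
  have hS : 0 ≤ ∑ k, exp (c * (x i ⬝ᵥ H.mulVec (s k))) :=
    Finset.sum_nonneg (fun k _ => (exp_pos _).le)
  have hD : 0 < D := add_pos_of_nonneg_of_pos hS hX
  have hsum : 1 - ∑ k, AptS k = (∑ r, exp (c * (x i ⬝ᵥ H.mulVec (x r)))) / D := by
    have h1 : ∑ k, AptS k = (∑ k, exp (c * (x i ⬝ᵥ H.mulVec (s k)))) / D :=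
      (Finset.sum_div _ _ _).symm
    rw [h1, eq_div_iff hD.ne', sub_mul, div_mul_cancel₀ _ hD.ne', one_mul]
    exact add_sub_cancel_left _ _
  have key : tpt = (∑ k, AptS k • Wv.mulVec (s k)) + (1 - ∑ k, AptS k) • t := by
    change (∑ k, AptS k • Wv.mulVec (s k)) + ∑ j, Apt j • Wv.mulVec (x j) = _
    congr 1
    rw [hsum, Finset.smul_sum]
    refine Finset.sum_congr rfl fun j _ => ?_
    rw [smul_smul]
    congr 1
    change _ / D = _ / D * (_ / _)
    rw [div_mul_div_comm, mul_comm D, mul_div_mul_left _ _ hX.ne']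
  refine ⟨key, ?_⟩
  have ht : t ∈ Submodule.span ℝ (insert t (Set.range fun k => Wv.mulVec (s k))) :=
    Submodule.subset_span (Set.mem_insert _ _)
  rw [key]
  refine Submodule.sub_mem _ (Submodule.add_mem _ ?_ (Submodule.smul_mem _ _ ht)) ht
  exact Submodule.sum_mem _ fun k _ => Submodule.smul_mem _ _
    (Submodule.subset_span (Set.mem_insert_of_mem _ ⟨k, rfl⟩))
end

section
/- Let x_1, ..., x_p ∈ ℝ^d be linearly independent vectors and c > 0. Then for every matrix P ∈ ℝ^{p×p} with all entries strictly positive and each row summing to 1, there exists a matrix H' ∈ ℝ^{d×d} such that the softmax attention computed from H', namely A_{ij} = exp(c·x_iᵀH'x_j) / Σ_{r=1}^p exp(c·x_iᵀH'x_r), satisfies A_{ij} = P_{ij} for all i, j ∈ {1,...,p}. That is, full fine-tuning can change the attention pattern over linearly independent inputs to any strictly positive row-stochastic matrix. -/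
open Matrix Real

/-- **Full fine-tuning can realize arbitrary strictly positive attention patterns.**
If `x_1, ..., x_p ∈ ℝ^d` are linearly independent and `c > 0`, then for every strictly positive
row-stochastic matrix `P ∈ ℝ^{p×p}` there exists `H' ∈ ℝ^{d×d}` such that the softmax attention
computed from `H'` equals `P`. -/
theorem full_finetuning_realizes_arbitrary_attention {d p : ℕ} (c : ℝ) (hc : 0 < c)
    (x : Fin p → Fin d → ℝ) (hx : LinearIndependent ℝ x)
    (P : Matrix (Fin p) (Fin p) ℝ) (hPpos : ∀ i j, 0 < P i j)
    (hProw : ∀ i, ∑ j, P i j = 1) :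
    ∃ H' : Matrix (Fin d) (Fin d) ℝ, ∀ i j : Fin p,
      exp (c * (x i ⬝ᵥ H'.mulVec (x j))) / (∑ r, exp (c * (x i ⬝ᵥ H'.mulVec (x r)))) = P i j := by
  obtain ⟨G, hG⟩ := (Fintype.linearCombination ℝ x).exists_leftInverse_of_injective
    (LinearMap.ker_eq_bot.mpr hx.fintypeLinearCombination_injective)
  have hGx : ∀ i, G (x i) = Pi.single i 1 := by
    intro i
    have h := LinearMap.congr_fun hG (Pi.single i 1)
    simpa [Fintype.linearCombination_apply_single] using h
  have hM : ∀ i, (LinearMap.toMatrix' G).mulVec (x i) = Pi.single i 1 := by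
    intro i
    rw [LinearMap.toMatrix'_mulVec, hGx]
  let L : Matrix (Fin p) (Fin p) ℝ := Matrix.of fun i j => log (P i j) / c
  have key : ∀ i j, exp (c * (x i ⬝ᵥ
      ((LinearMap.toMatrix' G)ᵀ * (L * LinearMap.toMatrix' G)).mulVec (x j))) = P i j := by
    intro i j
    rw [← Matrix.mulVec_mulVec, ← Matrix.mulVec_mulVec, hM, Matrix.dotProduct_mulVec,
      Matrix.vecMul_transpose, hM]
    simp only [Matrix.mulVec_single_one, single_one_dotProduct, Matrix.col_apply]
    simp only [L, Matrix.of_apply]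
    rw [mul_div_cancel₀ _ hc.ne', exp_log (hPpos i j)]
  refine ⟨(LinearMap.toMatrix' G)ᵀ * (L * LinearMap.toMatrix' G), fun i j => ?_⟩
  simp only [key, hProw, div_one]
end
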